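/- arXiv:1012.2167 — 2 statements merged into one kernel-verified Lean document; each statement's English description precedes it below -/
import Mathlib

section
/- For every integer $n \ge 0$, $a_{n+1} - a_n = \int_0^\infty \frac{1}{(1+e^t)^2}\left(\frac{t^{2n+1}}{(2n+1)!} + \frac{t^{2n}}{(2n)!}\right) dt$. -/
open MeasureTheory

/-- `a 0 = 1/2`, and for `n ≥ 1`, `a n = ζ(2n)(1 - 2^(1-2n))`
(a real number, expressed via the real part of `riemannZeta`). -/
noncomputable def a (n : ℕ) : ℝ :=
  if n = 0 then 1 / 2
  else (riemannZeta (2 * n)).re * (1 - (2 : ℝ) ^ ((1 : ℤ) - 2 * n))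

/-!
Write `σ(-t) = 1 / (1 + eᵗ)` and `F k = ∫₀^∞ σ(-t) tᵏ / k! dt`. Since `(σ(-t))' = σ(-t)² - σ(-t)`,
integrating `(σ(-t) p(t))'` gives `∫₀^∞ σ(-t)² p = ∫₀^∞ σ(-t) (p - p') - p(0) / 2` for every
polynomial `p`. For `p = t²ⁿ⁺¹ / (2n+1)! + t²ⁿ / (2n)!` the difference `p - p'` telescopes, leaving
`F (2n+1) - F (2n-1)`, or `F 1 - 1/2` if `n = 0`. Finally `F (2n+1) = a (n+1)`: the partial
fractions `1 / (eᵗ + 1) = 1 / (eᵗ - 1) - 2 / (e²ᵗ - 1)` reduce it to Riemann's formula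
`∫₀^∞ tˢ⁻¹ / (eᵗ - 1) dt = Γ(s) ζ(s)`.
-/

section

open Real Set Filter Asymptotics Topology Polynomial

theorem isLittleO_eval_exp_mul (p : ℝ[X]) {b : ℝ} (hb : 0 < b) :
    (fun t ↦ p.eval t) =o[atTop] fun t ↦ exp (b * t) := by
  have rescaled : (fun u ↦ (p.comp (C b⁻¹ * X)).eval u) =o[atTop] exp :=
    (isLittleO_iff_tendsto fun u hu ↦ absurd hu (exp_ne_zero u)).2
      (p.comp (C b⁻¹ * X)).tendsto_div_exp_atTop
  refine (rescaled.comp_tendsto (tendsto_id.const_mul_atTop hb)).congr_left fun t ↦ ?_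
  simp [hb.ne']

section ExpDecay

variable {f : ℝ → ℝ} {b : ℝ}

theorem isBigO_mul_eval_exp_neg {c : ℝ} (hcb : c < b) (hf : f =O[atTop] fun t ↦ exp (-b * t))
    (p : ℝ[X]) : (fun t ↦ f t * p.eval t) =O[atTop] fun t ↦ exp (-c * t) := by
  refine (hf.mul (isLittleO_eval_exp_mul p (sub_pos.2 hcb)).isBigO).congr_right fun t ↦ ?_
  rw [← exp_add]
  ring_nf

theorem integrableOn_mul_eval_of_isBigO_exp_neg (hfc : Continuous f) (hb : 0 < b)
    (hf : f =O[atTop] fun t ↦ exp (-b * t)) (p : ℝ[X]) (c : ℝ) :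
    IntegrableOn (fun t ↦ f t * p.eval t) (Ioi c) :=
  integrable_of_isBigO_exp_neg (half_pos hb) (by fun_prop)
    (isBigO_mul_eval_exp_neg (half_lt_self hb) hf p)

theorem tendsto_mul_eval_of_isBigO_exp_neg (hb : 0 < b) (hf : f =O[atTop] fun t ↦ exp (-b * t))
    (p : ℝ[X]) : Tendsto (fun t ↦ f t * p.eval t) atTop (𝓝 0) :=
  (isBigO_mul_eval_exp_neg (half_lt_self hb) hf p).trans_tendsto <|
    tendsto_exp_atBot.comp (tendsto_id.const_mul_atTop_of_neg (neg_lt_zero.2 (half_pos hb)))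

end ExpDecay

theorem sigmoid_neg_le_exp_neg (t : ℝ) : sigmoid (-t) ≤ exp (-t) := by
  rw [← sigmoid_mul_rexp_neg]
  exact mul_le_of_le_one_left (exp_nonneg _) (sigmoid_le_one t)

theorem isBigO_sigmoid_neg_pow (k : ℕ) :
    (fun t ↦ sigmoid (-t) ^ k) =O[atTop] fun t ↦ exp (-k * t) := by
  refine .of_bound' (.of_forall fun t ↦ ?_)
  rw [norm_of_nonneg (pow_nonneg (sigmoid_nonneg _) k), norm_of_nonneg (exp_nonneg _),
    neg_mul_comm, exp_nat_mul]
  exact pow_le_pow_left₀ (sigmoid_nonneg _) (sigmoid_neg_le_exp_neg t) k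

theorem integrableOn_sigmoid_neg_pow_mul_eval {k : ℕ} (hk : k ≠ 0) (p : ℝ[X]) (c : ℝ) :
    IntegrableOn (fun t ↦ sigmoid (-t) ^ k * p.eval t) (Ioi c) :=
  integrableOn_mul_eval_of_isBigO_exp_neg (by fun_prop) (by positivity)
    (isBigO_sigmoid_neg_pow k) p c

theorem integrableOn_sigmoid_neg_mul_eval (p : ℝ[X]) (c : ℝ) :
    IntegrableOn (fun t ↦ sigmoid (-t) * p.eval t) (Ioi c) := by
  simpa only [pow_one] using integrableOn_sigmoid_neg_pow_mul_eval one_ne_zero p c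

theorem tendsto_sigmoid_neg_mul_eval (p : ℝ[X]) :
    Tendsto (fun t ↦ sigmoid (-t) * p.eval t) atTop (𝓝 0) := by
  simpa only [pow_one] using
    tendsto_mul_eval_of_isBigO_exp_neg (by norm_num) (isBigO_sigmoid_neg_pow 1) p

theorem hasDerivAt_sigmoid_neg (t : ℝ) :
    HasDerivAt (fun t ↦ sigmoid (-t)) (sigmoid (-t) ^ 2 - sigmoid (-t)) t := by
  convert! (hasDerivAt_sigmoid (-t)).comp t (hasDerivAt_neg t) using 1
  ring

theorem integral_sigmoid_neg_sq_mul_eval (p : ℝ[X]) (c : ℝ) :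
    ∫ t in Ioi c, sigmoid (-t) ^ 2 * p.eval t =
      (∫ t in Ioi c, sigmoid (-t) * (p - derivative p).eval t) - sigmoid (-c) * p.eval c := by
  have hderiv (t : ℝ) : HasDerivAt (fun t ↦ sigmoid (-t) * p.eval t)
      (sigmoid (-t) ^ 2 * p.eval t - sigmoid (-t) * (p - derivative p).eval t) t := by
    convert! (hasDerivAt_sigmoid_neg t).mul (p.hasDerivAt t) using 1
    rw [eval_sub]
    ring
  have hsq := integrableOn_sigmoid_neg_pow_mul_eval two_ne_zero p c
  have hlin := integrableOn_sigmoid_neg_mul_eval (p - derivative p) c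
  have hftc := integral_Ioi_of_hasDerivAt_of_tendsto' (fun t _ ↦ hderiv t) (hsq.sub hlin)
    (tendsto_sigmoid_neg_mul_eval p)
  rw [integral_sub hsq hlin] at hftc
  linarith

/-- The polynomial `Xᵏ / k!`, for which differentiation is the index shift `k + 1 ↦ k`. -/
noncomputable def dividedPow (k : ℕ) : ℝ[X] := monomial k (k.factorial : ℝ)⁻¹

theorem eval_dividedPow (k : ℕ) (t : ℝ) : (dividedPow k).eval t = t ^ k / k.factorial := by
  rw [dividedPow, eval_monomial, div_eq_inv_mul]

theorem derivative_dividedPow_zero : derivative (dividedPow 0) = 0 := by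
  simp [dividedPow]

theorem derivative_dividedPow_succ (k : ℕ) : derivative (dividedPow (k + 1)) = dividedPow k := by
  simp only [dividedPow, derivative_monomial, add_tsub_cancel_right, Nat.factorial_succ]
  push_cast
  congr 1
  field_simp

/-- The complete Fermi–Dirac integral `∫₀^∞ tᵏ / (k! (1 + eᵗ)) dt`, at zero chemical potential.
The factor `1 / (1 + eᵗ)` is encoded as `sigmoid (-t)`. -/
noncomputable def fermiDirac (k : ℕ) : ℝ :=
  ∫ t in Ioi 0, sigmoid (-t) * (dividedPow k).eval t

theorem integral_sigmoid_neg_sq_mul_dividedPow_zero :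
    ∫ t in Ioi 0, sigmoid (-t) ^ 2 * (dividedPow 0).eval t = fermiDirac 0 - 1 / 2 := by
  rw [integral_sigmoid_neg_sq_mul_eval, derivative_dividedPow_zero, sub_zero, fermiDirac]
  simp [eval_dividedPow]

theorem integral_sigmoid_neg_sq_mul_dividedPow_succ (k : ℕ) :
    ∫ t in Ioi 0, sigmoid (-t) ^ 2 * (dividedPow (k + 1)).eval t =
      fermiDirac (k + 1) - fermiDirac k := by
  have hvanish : (dividedPow (k + 1)).eval 0 = 0 := by simp [eval_dividedPow]
  simp only [integral_sigmoid_neg_sq_mul_eval, derivative_dividedPow_succ, hvanish, mul_zero,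
    sub_zero, eval_sub, mul_sub]
  exact integral_sub (integrableOn_sigmoid_neg_mul_eval _ 0) (integrableOn_sigmoid_neg_mul_eval _ 0)

theorem hasSum_exp_neg_nat_add_one_mul {t : ℝ} (ht : 0 < t) :
    HasSum (fun n : ℕ ↦ exp (-(n + 1) * t)) (1 / (exp t - 1)) := by
  have hlt : exp (-t) < 1 := exp_lt_one_iff.2 (neg_lt_zero.2 ht)
  have hgeom := (hasSum_geometric_of_lt_one (exp_nonneg (-t)) hlt).mul_left (exp (-t))
  convert! hgeom using 1
  · ext n
    rw [← exp_nat_mul, ← exp_add]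
    ring_nf
  · have hne : exp t - 1 ≠ 0 := (sub_pos.2 (one_lt_exp_iff.2 ht)).ne'
    rw [exp_neg]
    field_simp

theorem hasMellin_one_div_exp_sub_one {s : ℂ} (hs : 1 < s.re) :
    HasMellin (fun t ↦ ((1 / (exp t - 1) : ℝ) : ℂ)) s (Complex.Gamma s * riemannZeta s) := by
  have hs₀ : 0 < s.re := one_pos.trans hs
  have hsum : Summable fun n : ℕ ↦ ‖(1 : ℂ)‖ / ((n : ℝ) + 1) ^ s.re := by
    simpa using (summable_nat_add_iff 1).2 (summable_one_div_nat_rpow.2 hs)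
  have hseries := hasSum_mellin (a := fun _ : ℕ ↦ 1) (p := fun n : ℕ ↦ (n : ℝ) + 1)
    (F := fun t ↦ ((1 / (exp t - 1) : ℝ) : ℂ)) (fun n ↦ .inr (by positivity)) hs₀
    (fun t ht ↦ by
      simpa only [one_mul] using Complex.hasSum_ofReal.2 (hasSum_exp_neg_nat_add_one_mul ht)) hsum
  have hvalue : mellin (fun t ↦ ((1 / (exp t - 1) : ℝ) : ℂ)) s =
      Complex.Gamma s * riemannZeta s := by
    rw [← hseries.tsum_eq, zeta_eq_tsum_one_div_nat_add_one_cpow hs, ← tsum_mul_left]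
    simp [div_eq_mul_inv]
  -- A divergent integral would have the junk value `0`, whereas `Γ(s) ζ(s) ≠ 0`.
  refine ⟨not_imp_comm.1 integral_undef ?_, hvalue⟩
  exact hvalue.trans_ne <| mul_ne_zero (Complex.Gamma_ne_zero_of_re_pos hs₀)
    (riemannZeta_ne_zero_of_one_lt_re hs)

theorem sigmoid_neg_eq_one_div_exp_sub_one {t : ℝ} (ht : t ≠ 0) :
    sigmoid (-t) = 1 / (exp t - 1) - 2 * (1 / (exp (2 * t) - 1)) := by
  have hsub : exp t - 1 ≠ 0 := sub_ne_zero.2 (exp_eq_one_iff t |>.not.2 ht)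
  have hadd : exp t + 1 ≠ 0 := by positivity
  have hfactor : exp (2 * t) - 1 = (exp t - 1) * (exp t + 1) := by
    rw [two_mul, exp_add]
    ring
  rw [sigmoid_def, neg_neg, hfactor, add_comm 1]
  field_simp
  ring

theorem mellin_sigmoid_neg {s : ℂ} (hs : 1 < s.re) :
    mellin (fun t ↦ (sigmoid (-t) : ℂ)) s =
      Complex.Gamma s * riemannZeta s * (1 - 2 ^ (1 - s)) := by
  obtain ⟨hconv, hvalue⟩ := hasMellin_one_div_exp_sub_one hs
  have hconv₂ := ((MellinConvergent.comp_mul_left two_pos).2 hconv).const_smul (2 : ℂ)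
  calc
    mellin (fun t ↦ (sigmoid (-t) : ℂ)) s
      = mellin (fun t ↦ ((1 / (exp t - 1) : ℝ) : ℂ) -
          (2 : ℂ) • ((1 / (exp (2 * t) - 1) : ℝ) : ℂ)) s := by
        refine setIntegral_congr_fun measurableSet_Ioi fun t ht ↦ ?_
        simp [sigmoid_neg_eq_one_div_exp_sub_one (mem_Ioi.1 ht).ne']
    _ = Complex.Gamma s * riemannZeta s -
          2 * (2 ^ (-s) * (Complex.Gamma s * riemannZeta s)) := by
        rw [(hasMellin_sub hconv hconv₂).2, mellin_const_smul,
          mellin_comp_mul_left (fun t ↦ ((1 / (exp t - 1) : ℝ) : ℂ)) s two_pos, hvalue]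
        simp
    _ = Complex.Gamma s * riemannZeta s * (1 - 2 ^ (1 - s)) := by
        rw [sub_eq_add_neg 1 s, Complex.cpow_add _ _ two_ne_zero, Complex.cpow_one]
        ring

theorem ofReal_fermiDirac (k : ℕ) :
    (fermiDirac k : ℂ) =
      mellin (fun t ↦ (sigmoid (-t) : ℂ)) (k + 1 : ℂ) / Complex.Gamma (k + 1 : ℂ) := by
  rw [fermiDirac, ← integral_complex_ofReal, mellin, ← integral_div]
  refine setIntegral_congr_fun measurableSet_Ioi fun t _ ↦ ?_
  simp only [eval_dividedPow, add_sub_cancel_right, Complex.cpow_natCast, smul_eq_mul,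
    Complex.Gamma_nat_eq_factorial]
  push_cast
  ring

theorem fermiDirac_eq_riemannZeta {k : ℕ} (hk : k ≠ 0) :
    fermiDirac k = (riemannZeta (k + 1)).re * (1 - 2 ^ (-k : ℤ)) := by
  have hs : 1 < (k + 1 : ℂ).re := by simpa using Nat.pos_of_ne_zero hk
  have hfd : (fermiDirac k : ℂ) = riemannZeta (k + 1) * ((1 - 2 ^ (-k : ℤ) : ℝ) : ℂ) := by
    have hΓ := Complex.Gamma_ne_zero_of_re_pos (one_pos.trans hs)
    rw [ofReal_fermiDirac, mellin_sigmoid_neg hs, mul_assoc, mul_div_cancel_left₀ _ hΓ,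
      sub_add_cancel_right, Complex.cpow_neg, Complex.cpow_natCast]
    simp
  simpa only [Complex.ofReal_re, Complex.re_mul_ofReal] using congrArg Complex.re hfd

end

theorem a_succ_eq_fermiDirac (n : ℕ) : a (n + 1) = fermiDirac (2 * n + 1) := by
  rw [a, if_neg n.succ_ne_zero, fermiDirac_eq_riemannZeta (Nat.succ_ne_zero _)]
  push_cast
  ring_nf

/-- For every `n ≥ 0`,
`a (n+1) - a n = ∫₀^∞ (1/(1+eᵗ)²) (t^(2n+1)/(2n+1)! + t^(2n)/(2n)!) dt`. -/
theorem a_succ_sub_a (n : ℕ) :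
    a (n + 1) - a n =
      ∫ t in Set.Ioi (0 : ℝ),
        (1 / (1 + Real.exp t) ^ 2) *
          (t ^ (2 * n + 1) / (Nat.factorial (2 * n + 1)) +
            t ^ (2 * n) / (Nat.factorial (2 * n))) := by
  have hintegrand (t : ℝ) :
      1 / (1 + Real.exp t) ^ 2 *
          (t ^ (2 * n + 1) / (2 * n + 1).factorial + t ^ (2 * n) / (2 * n).factorial) =
        Real.sigmoid (-t) ^ 2 * (dividedPow (2 * n + 1)).eval t +
          Real.sigmoid (-t) ^ 2 * (dividedPow (2 * n)).eval t := by
    rw [eval_dividedPow, eval_dividedPow, Real.sigmoid_def, neg_neg, inv_pow, one_div, mul_add]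
  simp only [hintegrand]
  rw [integral_add (integrableOn_sigmoid_neg_pow_mul_eval two_ne_zero _ 0)
      (integrableOn_sigmoid_neg_pow_mul_eval two_ne_zero _ 0),
    integral_sigmoid_neg_sq_mul_dividedPow_succ, a_succ_eq_fermiDirac]
  cases n with
  | zero =>
    rw [mul_zero, integral_sigmoid_neg_sq_mul_dividedPow_zero, a, if_pos rfl]
    ring
  | succ m =>
    rw [a_succ_eq_fermiDirac, show 2 * (m + 1) = 2 * m + 1 + 1 by ring,
      integral_sigmoid_neg_sq_mul_dividedPow_succ]
    ring
end

section
/- There exist constants $c, C > 0$ such that for all real $L \ge 0$, $\sum_{s=1}^{\infty} \frac{L^{2s}}{s!\,(2s)!} \le C\, e^{c\, L^{2/3}}$. -/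
/-!
With `x = L ^ (n / (n + 1))` and `(s!) ^ n ≤ (n * s)!`, the term `L ^ (n * s) / (s! * (n * s)!)` is
at most `(x ^ s / s!) ^ (n + 1)`. A sum of powers of nonnegative numbers is at most the power of
their sum, so the series is at most `(∑ x ^ s / s!) ^ (n + 1) = exp ((n + 1) * x)`.
The theorem is the case `n = 2`.
-/

open scoped Nat

theorem sum_pow_succ_le_pow_succ_sum {ι R : Type*} [Semiring R] [PartialOrder R]
    [IsOrderedRing R] {u : Finset ι} {f : ι → R} (hf : ∀ i ∈ u, 0 ≤ f i) (n : ℕ) :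
    ∑ i ∈ u, f i ^ (n + 1) ≤ (∑ i ∈ u, f i) ^ (n + 1) :=
  calc ∑ i ∈ u, f i ^ (n + 1)
    _ ≤ ∑ i ∈ u, (∑ j ∈ u, f j) ^ n * f i := by
      refine Finset.sum_le_sum fun i hi ↦ ?_
      rw [pow_succ]
      exact mul_le_mul_of_nonneg_right
        (pow_le_pow_left₀ (hf i hi) (Finset.single_le_sum hf hi) n) (hf i hi)
    _ = (∑ i ∈ u, f i) ^ (n + 1) := by rw [← Finset.mul_sum, pow_succ]

theorem factorial_pow_le_factorial_mul (n k : ℕ) : k ! ^ n ≤ (n * k)! := by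
  simpa using Nat.le_of_dvd (Nat.factorial_pos _)
    (Nat.prod_factorial_dvd_factorial_sum (Finset.range n) fun _ ↦ k)

section

variable {x L : ℝ} (n : ℕ)

theorem sum_pow_div_factorial_le_exp (hx : 0 ≤ x) (u : Finset ℕ) :
    ∑ s ∈ u, x ^ s / s ! ≤ Real.exp x := by
  rw [Real.exp_eq_exp_ℝ, NormedSpace.exp_eq_tsum_div]
  exact (Real.summable_pow_div_factorial x).sum_le_tsum u fun s _ ↦ by positivity

theorem pow_div_factorial_mul_factorial_le (hx : 0 ≤ x) (s : ℕ) :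
    x ^ ((n + 1) * s) / (s ! * (n * s)!) ≤ (x ^ s / s !) ^ (n + 1) := by
  have factorial_le : (s ! : ℝ) ^ n ≤ (n * s)! := mod_cast factorial_pow_le_factorial_mul n s
  calc x ^ ((n + 1) * s) / (s ! * (n * s)!)
    _ ≤ x ^ ((n + 1) * s) / (s ! * (s ! : ℝ) ^ n) := by gcongr
    _ = (x ^ s / s !) ^ (n + 1) := by rw [div_pow, ← pow_mul, ← pow_succ', mul_comm s]

theorem sum_pow_div_factorial_mul_factorial_le_exp (hx : 0 ≤ x) (u : Finset ℕ) :
    ∑ s ∈ u, x ^ ((n + 1) * s) / (s ! * (n * s)!) ≤ Real.exp ((n + 1) * x) :=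
  calc ∑ s ∈ u, x ^ ((n + 1) * s) / (s ! * (n * s)!)
    _ ≤ ∑ s ∈ u, (x ^ s / s !) ^ (n + 1) :=
      Finset.sum_le_sum fun s _ ↦ pow_div_factorial_mul_factorial_le n hx s
    _ ≤ (∑ s ∈ u, x ^ s / s !) ^ (n + 1) :=
      sum_pow_succ_le_pow_succ_sum (fun s _ ↦ by positivity) n
    _ ≤ Real.exp x ^ (n + 1) :=
      pow_le_pow_left₀ (Finset.sum_nonneg fun s _ ↦ by positivity)
        (sum_pow_div_factorial_le_exp hx u) _
    _ = Real.exp ((n + 1) * x) := by rw [← Real.exp_nat_mul, Nat.cast_succ]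

theorem rpow_div_succ_pow_succ (hL : 0 ≤ L) : (L ^ ((n : ℝ) / (n + 1))) ^ (n + 1) = L ^ n := by
  rw [← Real.rpow_mul_natCast hL, Nat.cast_succ, div_mul_cancel₀ _ n.cast_add_one_ne_zero,
    Real.rpow_natCast]

theorem sum_pow_mul_div_factorial_mul_factorial_le_exp_rpow (hL : 0 ≤ L) (u : Finset ℕ) :
    ∑ s ∈ u, L ^ (n * s) / (s ! * (n * s)!) ≤ Real.exp ((n + 1) * L ^ ((n : ℝ) / (n + 1))) := by
  simpa only [pow_mul, rpow_div_succ_pow_succ n hL] using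
    sum_pow_div_factorial_mul_factorial_le_exp n (Real.rpow_nonneg hL (n / (n + 1))) u

theorem summable_pow_mul_div_factorial_mul_factorial (hL : 0 ≤ L) :
    Summable fun s : ℕ ↦ L ^ (n * s) / (s ! * (n * s)!) :=
  summable_of_sum_le (fun s ↦ by positivity)
    (sum_pow_mul_div_factorial_mul_factorial_le_exp_rpow n hL)

theorem series_subexponential_bound_general (hL : 0 ≤ L) :
    ∑' s : ℕ, L ^ (n * s) / (s ! * (n * s)!) ≤ Real.exp ((n + 1) * L ^ ((n : ℝ) / (n + 1))) :=
  Real.tsum_le_of_sum_le (fun s ↦ by positivity)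
    (sum_pow_mul_div_factorial_mul_factorial_le_exp_rpow n hL)

end

/-- There are constants `c, C > 0` such that for all `L ≥ 0`,
`∑_{s=1}^∞ L^(2s) / (s! (2s)!) ≤ C e^(c L^(2/3))`. -/
theorem series_subexponential_bound :
    ∃ c : ℝ, 0 < c ∧ ∃ C : ℝ, 0 < C ∧ ∀ L : ℝ, 0 ≤ L →
      (∑' s : ℕ, L ^ (2 * (s + 1)) /
          (Nat.factorial (s + 1) * Nat.factorial (2 * (s + 1)))) ≤
        C * Real.exp (c * L ^ ((2 : ℝ) / 3)) := by
  refine ⟨2 + 1, by norm_num, 1, one_pos, fun L hL ↦ ?_⟩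
  calc _ ≤ ∑' s : ℕ, L ^ (2 * s) / (s ! * (2 * s)!) :=
        tsum_comp_le_tsum_of_inj (summable_pow_mul_div_factorial_mul_factorial 2 hL)
          (fun s ↦ by positivity) Nat.succ_injective
    _ ≤ 1 * Real.exp ((2 + 1) * L ^ ((2 : ℝ) / 3)) := by
        simpa [two_add_one_eq_three] using series_subexponential_bound_general 2 hL
end
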